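/- Let A ∈ ℝ^{n×n} have no eigenvalue with positive real part (every eigenvalue λ of A over ℂ satisfies Re(λ) ≤ 0) and let C ∈ ℝ^{m×n} have full column rank n. Set L := (CᵀC)⁻¹Cᵀ, so that LC = I_n. Then for every p, every connected interconnection Γ ∈ ℝ^{p×p}, every r ∈ ℝ^p with rᵀΓ = 0 and rᵀ1 = 1, and every initial vector x(0) ∈ ℝ^{pn}, the solution x(t) = exp(t(I_p ⊗ A + Γ ⊗ LC)) x(0) satisfies |x(t) − (1rᵀ ⊗ exp(tA)) x(0)| → 0 as t → ∞; in particular the blocks x_i(t) synchronize to x̄(t) = (rᵀ ⊗ exp(tA)) x(0). -/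

import Mathlib

open Matrix Filter Topology
open scoped Kronecker

/-- `Γ` is an interconnection: off-diagonal entries are nonnegative and each diagonal
entry is minus the sum of the other entries in its row (equivalently, rows sum to zero). -/
def IsInterconnection {p : ℕ} (Γ : Matrix (Fin p) (Fin p) ℝ) : Prop :=
  (∀ i j, i ≠ j → 0 ≤ Γ i j) ∧ ∀ i, ∑ j, Γ i j = 0

/-- `Γ` is a connected interconnection: it is an interconnection and its graph
(with an edge `(i, j)` whenever `Γ i j > 0`) has a node reachable by a directed
path from every other node. -/
def IsConnectedInterconnection {p : ℕ} (Γ : Matrix (Fin p) (Fin p) ℝ) : Prop :=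
  IsInterconnection Γ ∧
    ∃ k : Fin p, ∀ i : Fin p, Relation.ReflTransGen (fun a b => 0 < Γ a b) i k

/-!
Since `LC = I`, the matrices `I ⊗ A` and `Γ ⊗ LC` commute and the flow is `exp(tΓ) ⊗ exp(tA)`. The
matrix `Q = 1rᵀ` is idempotent with `ΓQ = QΓ = 0`, so `exp(tΓ) - Q = exp(t(Γ - Q))(I - Q)`. An
eigenvalue of `Γ - Q` is either `-1` or an eigenvalue of `Γ` with an eigenvector killed by `rᵀ`. By
Gershgorin's theorem the latter has negative real part unless it is zero, and zero is excluded by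
the maximum principle: along a path to the root a vector in the kernel of `Γ` keeps its maximum, so
it is constant, and a nonzero constant vector is not killed by `rᵀ`. Thus `exp(t(Γ - Q))` decays
exponentially and outweighs the at most polynomial growth of `exp(tA)`.
-/

section MatrixAlgebra

theorem isIdempotentElem_vecMulVec {ι R : Type*} [Fintype ι] [Semiring R] {w r : ι → R}
    (h : r ⬝ᵥ w = 1) : IsIdempotentElem (vecMulVec w r) := by
  rw [IsIdempotentElem, vecMulVec_mul_vecMulVec, h, one_smul]

theorem vecMulVec_one_kronecker_mulVec_apply {ι κ R : Type*} [Fintype ι] [Fintype κ]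
    [Semiring R] (r : ι → R) (B : Matrix κ κ R) (x : ι × κ → R) (i : ι) (k : κ) :
    ((vecMulVec (fun _ => 1) r ⊗ₖ B) *ᵥ x) (i, k) =
      ∑ j, r j * (B *ᵥ fun l => x (j, l)) k := by
  simp [mulVec, dotProduct, Fintype.sum_prod_type, vecMulVec_apply, Finset.mul_sum, mul_assoc]

theorem inv_transpose_mul_self_mul_transpose_mul_self {m n K : Type*} [Fintype m]
    [Fintype n] [DecidableEq n] [Field K] [LinearOrder K] [IsStrictOrderedRing K]
    {C : Matrix m n K} (hC : C.rank = Fintype.card n) :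
    (Cᵀ * C)⁻¹ * Cᵀ * C = 1 := by
  have hrange : LinearMap.range (Cᵀ * C).mulVecLin = ⊤ := by
    apply Submodule.eq_top_of_finrank_eq
    rw [← Matrix.rank, rank_transpose_mul_self, hC, Module.finrank_fintype_fun_eq_card]
  have hunit : IsUnit (Cᵀ * C) := mulVec_surjective_iff_isUnit.1 (LinearMap.range_eq_top.1 hrange)
  rw [Matrix.mul_assoc, nonsing_inv_mul _ ((isUnit_iff_isUnit_det _).1 hunit)]

theorem mem_spectrum_iff_exists_mulVec_eq_smul {ι K : Type*} [Fintype ι] [DecidableEq ι] [Field K]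
    {M : Matrix ι ι K} {μ : K} : μ ∈ spectrum K M ↔ ∃ v ≠ 0, M *ᵥ v = μ • v := by
  rw [← spectrum_toLin', ← Module.End.hasEigenvalue_iff_mem_spectrum]
  constructor
  · intro hμ
    obtain ⟨v, hv⟩ := hμ.exists_hasEigenvector
    exact ⟨v, hv.2, hv.apply_eq_smul⟩
  · rintro ⟨v, hv0, hv⟩
    exact Module.End.hasEigenvalue_of_hasEigenvector
      (Module.End.hasEigenvector_iff.2 ⟨Module.End.mem_eigenspace_iff.2 hv, hv0⟩)

theorem continuous_kronecker {l m n p R : Type*} [Mul R] [TopologicalSpace R] [ContinuousMul R] :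
    Continuous fun P : Matrix l m R × Matrix n p R => P.1 ⊗ₖ P.2 :=
  continuous_matrix fun i j =>
    (continuous_fst.matrix_elem i.1 j.1).mul (continuous_snd.matrix_elem i.2 j.2)

end MatrixAlgebra

section Exponential

variable {ι κ 𝕂 : Type*} [Fintype ι] [DecidableEq ι] [Fintype κ] [DecidableEq κ] [RCLike 𝕂]

theorem hasSum_matrix_exp (M : Matrix ι ι 𝕂) :
    HasSum (fun k : ℕ => (k.factorial : 𝕂)⁻¹ • M ^ k) (NormedSpace.exp M) := by
  open scoped Matrix.Norms.Operator in exact NormedSpace.exp_series_hasSum_exp' M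

theorem exp_mulVec_eq_sum_range_of_pow_mulVec_eq_zero {N : Matrix ι ι 𝕂} {v : ι → 𝕂} {k : ℕ}
    (hv : N ^ k *ᵥ v = 0) :
    NormedSpace.exp N *ᵥ v = ∑ j ∈ Finset.range k, (j.factorial : 𝕂)⁻¹ • (N ^ j *ᵥ v) := by
  have hcont : Continuous fun M : Matrix ι ι 𝕂 => M *ᵥ v := by fun_prop
  have hsum : HasSum (fun j : ℕ => (j.factorial : 𝕂)⁻¹ • (N ^ j *ᵥ v))
      (NormedSpace.exp N *ᵥ v) := by
    simpa only [Function.comp_def, mulVecBilin_apply, LinearMap.flip_apply, smul_mulVec] using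
      (hasSum_matrix_exp N).map ((mulVecBilin 𝕂 𝕂).flip v) hcont
  refine hsum.unique (hasSum_sum_of_ne_finset_zero fun j hj => ?_)
  obtain ⟨l, rfl⟩ := Nat.exists_eq_add_of_le' (by simpa using hj : k ≤ j)
  rw [pow_add, ← mulVec_mulVec, hv, mulVec_zero, smul_zero]

theorem exp_mul_eq_self_of_mul_eq_zero {l : Type*} {X : Matrix ι ι 𝕂} {P : Matrix ι l 𝕂}
    (h : X * P = 0) : NormedSpace.exp X * P = P := by
  ext i j
  have hXP : X ^ 1 *ᵥ P.col j = 0 := by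
    rw [pow_one]
    exact funext fun i => congrFun₂ h i j
  exact (congrFun (exp_mulVec_eq_sum_range_of_pow_mulVec_eq_zero hXP) i).trans (by simp)

theorem exp_add_smul_one (M : Matrix ι ι 𝕂) (z : 𝕂) :
    NormedSpace.exp (M + z • (1 : Matrix ι ι 𝕂)) = NormedSpace.exp z • NormedSpace.exp M := by
  have hz : NormedSpace.exp (z • (1 : Matrix ι ι 𝕂)) = NormedSpace.exp z • 1 := by
    simp only [← Algebra.algebraMap_eq_smul_one]
    open scoped Matrix.Norms.Operator in exact (NormedSpace.algebraMap_exp_comm z).symm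
  rw [Matrix.exp_add_of_commute _ _ ((Commute.one_right M).smul_right z), hz, mul_smul_one]

theorem exp_map_ofReal (M : Matrix ι ι ℝ) :
    NormedSpace.exp (M.map Complex.ofReal) = (NormedSpace.exp M).map Complex.ofReal := by
  have hcont : Continuous (Complex.ofRealHom.mapMatrix (m := ι)) :=
    continuous_id.matrix_map Complex.continuous_ofReal
  open scoped Matrix.Norms.Operator in
    exact (NormedSpace.map_exp Complex.ofRealHom.mapMatrix hcont M).symm

theorem exp_one_kronecker (A : Matrix κ κ 𝕂) :
    NormedSpace.exp ((1 : Matrix ι ι 𝕂) ⊗ₖ A) = 1 ⊗ₖ NormedSpace.exp A := by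
  let f : Matrix κ κ 𝕂 →ₐ[𝕂] Matrix (ι × κ) (ι × κ) 𝕂 :=
    (kroneckerAlgEquiv ι κ 𝕂).toAlgHom.comp Algebra.TensorProduct.includeRight
  have hf (M : Matrix κ κ 𝕂) : f M = 1 ⊗ₖ M := by simp [f]
  have hcont : Continuous f :=
    (continuous_kronecker.comp (Continuous.prodMk_right 1)).congr fun M => (hf M).symm
  rw [← hf, ← hf]
  open scoped Matrix.Norms.Operator in exact (NormedSpace.map_exp f hcont A).symm

theorem exp_kronecker_one (Γ : Matrix ι ι 𝕂) :
    NormedSpace.exp (Γ ⊗ₖ (1 : Matrix κ κ 𝕂)) = NormedSpace.exp Γ ⊗ₖ 1 := by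
  let f : Matrix ι ι 𝕂 →ₐ[𝕂] Matrix (ι × κ) (ι × κ) 𝕂 :=
    (kroneckerAlgEquiv ι κ 𝕂).toAlgHom.comp Algebra.TensorProduct.includeLeft
  have hf (M : Matrix ι ι 𝕂) : f M = M ⊗ₖ 1 := by simp [f]
  have hcont : Continuous f :=
    (continuous_kronecker.comp (Continuous.prodMk_left 1)).congr fun M => (hf M).symm
  rw [← hf, ← hf]
  open scoped Matrix.Norms.Operator in exact (NormedSpace.map_exp f hcont Γ).symm

theorem exp_smul_one_kronecker_add_kronecker_one (A : Matrix κ κ 𝕂) (Γ : Matrix ι ι 𝕂) (t : ℝ) :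
    NormedSpace.exp (t • ((1 : Matrix ι ι 𝕂) ⊗ₖ A + Γ ⊗ₖ (1 : Matrix κ κ 𝕂))) =
      NormedSpace.exp (t • Γ) ⊗ₖ NormedSpace.exp (t • A) := by
  have hcomm : Commute ((1 : Matrix ι ι 𝕂) ⊗ₖ (t • A)) ((t • Γ) ⊗ₖ (1 : Matrix κ κ 𝕂)) := by
    simp only [Commute, SemiconjBy, ← mul_kronecker_mul, one_mul, mul_one]
  rw [smul_add, ← kronecker_smul, ← smul_kronecker, Matrix.exp_add_of_commute _ _ hcomm,
    exp_one_kronecker, exp_kronecker_one, ← mul_kronecker_mul, one_mul, mul_one]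

end Exponential

section Hurwitz

variable {ι κ : Type*} [Fintype ι] [DecidableEq ι] [Fintype κ] [DecidableEq κ]

/-- A complex square matrix is Hurwitz if all its eigenvalues lie in the open left half-plane;
this characterizes the asymptotic stability of `dx/dt = M x`. A real matrix is viewed as a complex
one through `Matrix.map · Complex.ofReal`. -/
def IsHurwitz (M : Matrix ι ι ℂ) : Prop :=
  ∀ μ ∈ spectrum ℂ M, μ.re < 0

theorem isHurwitz_map_add_smul_one_iff {M : Matrix ι ι ℝ} {c : ℝ} :
    IsHurwitz ((M + c • (1 : Matrix ι ι ℝ)).map Complex.ofReal) ↔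
      ∀ μ ∈ spectrum ℂ (M.map Complex.ofReal), μ.re + c < 0 := by
  have hmap : (M + c • (1 : Matrix ι ι ℝ)).map Complex.ofReal =
      M.map Complex.ofReal + algebraMap ℂ (Matrix ι ι ℂ) c := by
    ext i j
    simp [Algebra.algebraMap_eq_smul_one, Matrix.one_apply, apply_ite Complex.ofReal]
  rw [IsHurwitz, hmap, ← spectrum.add_singleton_eq, Set.add_singleton, Set.forall_mem_image]
  simp only [Complex.add_re, Complex.ofReal_re]

theorem tendsto_cexp_mul_mul_pow_atTop {μ : ℂ} (hμ : μ.re < 0) (j : ℕ) :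
    Tendsto (fun t : ℝ => Complex.exp (t * μ) * (t : ℂ) ^ j) atTop (𝓝 0) := by
  rw [tendsto_zero_iff_norm_tendsto_zero]
  refine (tendsto_rpow_mul_exp_neg_mul_atTop_nhds_zero j (-μ.re) (neg_pos.2 hμ)).congr' ?_
  filter_upwards [eventually_ge_atTop 0] with t ht
  simp [Complex.norm_exp, abs_of_nonneg ht, mul_comm]

theorem tendsto_exp_smul_mulVec_of_pow_mulVec_eq_zero {M : Matrix ι ι ℂ} {μ : ℂ}
    (hμ : μ.re < 0) {v : ι → ℂ} {k : ℕ} (hv : (M - μ • (1 : Matrix ι ι ℂ)) ^ k *ᵥ v = 0) :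
    Tendsto (fun t : ℝ => NormedSpace.exp (t • M) *ᵥ v) atTop (𝓝 0) := by
  set N := M - μ • (1 : Matrix ι ι ℂ) with hN
  have hexp (t : ℝ) : NormedSpace.exp (t • M) *ᵥ v =
      ∑ j ∈ Finset.range k,
        (Complex.exp (t * μ) * (t : ℂ) ^ j) • (j.factorial : ℂ)⁻¹ • (N ^ j *ᵥ v) := by
    have hM : t • M = t • N + ((t : ℂ) * μ) • (1 : Matrix ι ι ℂ) := by
      rw [hN, smul_sub, mul_smul, Complex.coe_smul, sub_add_cancel]
    have htv : (t • N) ^ k *ᵥ v = 0 := by rw [smul_pow, smul_mulVec, hv, smul_zero]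
    rw [hM, exp_add_smul_one, smul_mulVec, exp_mulVec_eq_sum_range_of_pow_mulVec_eq_zero htv,
      Finset.smul_sum, ← Complex.exp_eq_exp_ℂ]
    refine Finset.sum_congr rfl fun j _ => ?_
    rw [smul_pow, smul_mulVec, mul_smul, ← Complex.ofReal_pow, Complex.coe_smul,
      smul_comm (t ^ j)]
  simp only [hexp]
  rw [← Finset.sum_const_zero (s := Finset.range k)]
  refine tendsto_finsetSum _ fun j _ => ?_
  simpa only [zero_smul] using (tendsto_cexp_mul_mul_pow_atTop hμ j).smul_const
    ((j.factorial : ℂ)⁻¹ • (N ^ j *ᵥ v))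

theorem IsHurwitz.tendsto_exp_smul_mulVec {M : Matrix ι ι ℂ} (hM : IsHurwitz M) (v : ι → ℂ) :
    Tendsto (fun t : ℝ => NormedSpace.exp (t • M) *ᵥ v) atTop (𝓝 0) := by
  have hv : v ∈ ⨆ μ, Module.End.maxGenEigenspace (toLin' M) μ := by
    rw [Module.End.iSup_maxGenEigenspace_eq_top]
    exact Submodule.mem_top
  induction hv using Submodule.iSup_induction' with
  | zero => simp only [mulVec_zero, tendsto_const_nhds]
  | add v w _ _ hv hw => simpa only [mulVec_add, add_zero] using hv.add hw
  | mem μ v hv =>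
    by_cases hμ : Module.End.HasEigenvalue (toLin' M) μ
    · obtain ⟨k, hk⟩ := (Module.End.mem_maxGenEigenspace _ _ _).1 hv
      refine tendsto_exp_smul_mulVec_of_pow_mulVec_eq_zero (μ := μ) (k := k) (hM μ ?_) ?_
      · rwa [← spectrum_toLin', ← Module.End.hasEigenvalue_iff_mem_spectrum]
      · rwa [← toLin'_apply, toLin'_pow, map_sub, map_smul, toLin'_one]
    · have hbot : Module.End.maxGenEigenspace (toLin' M) μ = ⊥ := by
        by_contra hne
        exact hμ (Module.End.HasUnifEigenvalue.lt zero_lt_one hne)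
      rw [hbot, Submodule.mem_bot] at hv
      simp only [hv, mulVec_zero, tendsto_const_nhds]

theorem IsHurwitz.tendsto_exp_smul {M : Matrix ι ι ℂ} (hM : IsHurwitz M) :
    Tendsto (fun t : ℝ => NormedSpace.exp (t • M)) atTop (𝓝 0) := by
  refine tendsto_pi_nhds.2 fun i => tendsto_pi_nhds.2 fun j => ?_
  simpa using tendsto_pi_nhds.1 (hM.tendsto_exp_smul_mulVec (Pi.single j 1)) i

theorem tendsto_exp_smul_of_isHurwitz_map {M : Matrix ι ι ℝ}
    (hM : IsHurwitz (M.map Complex.ofReal)) :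
    Tendsto (fun t : ℝ => NormedSpace.exp (t • M)) atTop (𝓝 0) := by
  have hre : Continuous fun Z : Matrix ι ι ℂ => Z.map Complex.re :=
    continuous_id.matrix_map Complex.continuous_re
  have hlim := (hre.tendsto 0).comp hM.tendsto_exp_smul
  rw [Matrix.map_zero _ Complex.zero_re] at hlim
  refine hlim.congr fun t => ?_
  have hsmul : t • M.map Complex.ofReal = (t • M).map Complex.ofReal := by ext; simp
  ext
  simp [hsmul, exp_map_ofReal]

theorem tendsto_exp_kronecker_exp {B : Matrix ι ι ℝ} {A : Matrix κ κ ℝ}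
    (hAB : ∀ α ∈ spectrum ℂ (A.map Complex.ofReal), ∀ β ∈ spectrum ℂ (B.map Complex.ofReal),
      α.re + β.re < 0) :
    Tendsto (fun t : ℝ => NormedSpace.exp (t • B) ⊗ₖ NormedSpace.exp (t • A)) atTop (𝓝 0) := by
  -- Moving a scalar `c` from one factor to the other leaves the Kronecker sum unchanged, and a `c`
  -- that separates the real parts of the spectra of `A` and `-B` makes both factors decay.
  obtain ⟨c, hA, hB⟩ : ∃ c : ℝ, (∀ α ∈ spectrum ℂ (A.map Complex.ofReal), α.re < c) ∧
      ∀ β ∈ spectrum ℂ (B.map Complex.ofReal), c < -β.re := by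
    obtain ⟨c, hA, hB⟩ := Order.exists_between_finsets
      ((Matrix.finite_spectrum (A.map Complex.ofReal)).toFinset.image Complex.re)
      ((Matrix.finite_spectrum (B.map Complex.ofReal)).toFinset.image fun β => -β.re)
      (by simpa [lt_neg_iff_add_neg] using hAB)
    exact ⟨c, by simpa using hA, by simpa using hB⟩
  have hA' : IsHurwitz ((A + (-c) • (1 : Matrix κ κ ℝ)).map Complex.ofReal) :=
    isHurwitz_map_add_smul_one_iff.2 fun α hα => by linarith [hA α hα]
  have hB' : IsHurwitz ((B + c • (1 : Matrix ι ι ℝ)).map Complex.ofReal) :=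
    isHurwitz_map_add_smul_one_iff.2 fun β hβ => by linarith [hB β hβ]
  have hshift : (1 : Matrix ι ι ℝ) ⊗ₖ (A + (-c) • (1 : Matrix κ κ ℝ))
      + (B + c • (1 : Matrix ι ι ℝ)) ⊗ₖ (1 : Matrix κ κ ℝ) = 1 ⊗ₖ A + B ⊗ₖ 1 := by
    rw [kronecker_add, add_kronecker, kronecker_smul, smul_kronecker, neg_smul]
    abel
  have hlim := (continuous_kronecker.tendsto (0, 0)).comp
    ((tendsto_exp_smul_of_isHurwitz_map hB').prodMk_nhds (tendsto_exp_smul_of_isHurwitz_map hA'))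
  rw [zero_kronecker] at hlim
  refine hlim.congr fun t => ?_
  rw [Function.comp_apply, ← exp_smul_one_kronecker_add_kronecker_one,
    ← exp_smul_one_kronecker_add_kronecker_one, hshift]

end Hurwitz

section Deflation

variable {ι κ : Type*} [Fintype ι] [DecidableEq ι] [Fintype κ] [DecidableEq κ]

theorem eq_neg_one_or_exists_eigenvector_of_mem_spectrum_sub {K : Type*} [Field K]
    {M Q : Matrix ι ι K} (hQM : Q * M = 0) (hQ : IsIdempotentElem Q) {μ : K}
    (hμ : μ ∈ spectrum K (M - Q)) : μ = -1 ∨ ∃ v ≠ 0, M *ᵥ v = μ • v ∧ Q *ᵥ v = 0 := by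
  obtain ⟨v, hv0, hv⟩ := mem_spectrum_iff_exists_mulVec_eq_smul.1 hμ
  have hQv : (μ + 1) • (Q *ᵥ v) = 0 := by
    have h := congrArg (Q *ᵥ ·) hv
    simp only [mulVec_mulVec, mul_sub, hQM, hQ.eq, zero_sub, neg_mulVec, mulVec_smul] at h
    rw [add_smul, one_smul, ← h, neg_add_cancel]
  rcases smul_eq_zero.1 hQv with hμ1 | hQv0
  · exact Or.inl (eq_neg_of_add_eq_zero_left hμ1)
  · refine Or.inr ⟨v, hv0, ?_, hQv0⟩
    rwa [sub_mulVec, hQv0, sub_zero] at hv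

theorem exp_smul_sub_eq_exp_smul_sub_mul {𝕂 : Type*} [RCLike 𝕂] {Γ Q : Matrix ι ι 𝕂}
    (hΓQ : Γ * Q = 0) (hQΓ : Q * Γ = 0) (hQ : IsIdempotentElem Q) (t : ℝ) :
    NormedSpace.exp (t • Γ) - Q = NormedSpace.exp (t • (Γ - Q)) * (1 - Q) := by
  have hfix : NormedSpace.exp (t • Γ) * Q = Q :=
    exp_mul_eq_self_of_mul_eq_zero (by rw [smul_mul_assoc, hΓQ, smul_zero])
  have hfix' : NormedSpace.exp (t • Q) * (1 - Q) = 1 - Q :=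
    exp_mul_eq_self_of_mul_eq_zero (by rw [smul_mul_assoc, hQ.mul_one_sub_self, smul_zero])
  have hcomm : Commute (t • (Γ - Q)) (t • Q) := by
    have hΓQcomm : Commute Γ Q := hΓQ.trans hQΓ.symm
    exact ((hΓQcomm.sub_left (Commute.refl Q)).smul_left t).smul_right t
  calc NormedSpace.exp (t • Γ) - Q
      = NormedSpace.exp (t • (Γ - Q) + t • Q) * (1 - Q) := by
        rw [← smul_add, sub_add_cancel, mul_sub, mul_one, hfix]
    _ = NormedSpace.exp (t • (Γ - Q)) * (1 - Q) := by
        rw [Matrix.exp_add_of_commute _ _ hcomm, mul_assoc, hfix']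

theorem tendsto_exp_smul_sub_kronecker_exp {Γ Q : Matrix ι ι ℝ} {A : Matrix κ κ ℝ}
    (hΓQ : Γ * Q = 0) (hQΓ : Q * Γ = 0) (hQ : IsIdempotentElem Q)
    (hAΓ : ∀ α ∈ spectrum ℂ (A.map Complex.ofReal),
      ∀ γ ∈ spectrum ℂ ((Γ - Q).map Complex.ofReal), α.re + γ.re < 0) :
    Tendsto (fun t : ℝ =>
        NormedSpace.exp (t • ((1 : Matrix ι ι ℝ) ⊗ₖ A + Γ ⊗ₖ (1 : Matrix κ κ ℝ)))
          - Q ⊗ₖ NormedSpace.exp (t • A))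
      atTop (𝓝 0) := by
  have hlim := (tendsto_exp_kronecker_exp hAΓ).mul_const ((1 - Q) ⊗ₖ (1 : Matrix κ κ ℝ))
  rw [zero_mul] at hlim
  refine hlim.congr fun t => ?_
  rw [← mul_kronecker_mul, mul_one, ← exp_smul_sub_eq_exp_smul_sub_mul hΓQ hQΓ hQ,
    exp_smul_one_kronecker_add_kronecker_one]
  ext
  simp [sub_mul]

end Deflation

section Interconnection

variable {p : ℕ} {Γ : Matrix (Fin p) (Fin p) ℝ}

theorem IsInterconnection.mulVec_const_one (hΓ : IsInterconnection Γ) :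
    Γ *ᵥ (fun _ => 1) = 0 := by
  ext i
  simpa [mulVec, dotProduct] using hΓ.2 i

theorem IsInterconnection.re_neg_or_eq_zero_of_mem_spectrum (hΓ : IsInterconnection Γ) {μ : ℂ}
    (hμ : μ ∈ spectrum ℂ (Γ.map Complex.ofReal)) : μ.re < 0 ∨ μ = 0 := by
  rw [← spectrum_toLin', ← Module.End.hasEigenvalue_iff_mem_spectrum] at hμ
  obtain ⟨i, hi⟩ := eigenvalue_mem_ball hμ
  have hradius : ∑ j ∈ Finset.univ.erase i, ‖Γ.map Complex.ofReal i j‖ = -Γ i i := by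
    rw [eq_neg_iff_add_eq_zero, ← hΓ.2 i, ← Finset.sum_erase_add _ _ (Finset.mem_univ i)]
    congr 1
    refine Finset.sum_congr rfl fun j hj => ?_
    simpa using hΓ.1 i j (Finset.ne_of_mem_erase hj).symm
  rw [hradius, mem_closedBall_iff_norm, Matrix.map_apply] at hi
  have hdiag : Γ i i ≤ 0 := neg_nonneg.1 ((norm_nonneg _).trans hi)
  have hsq : (μ.re - Γ i i) ^ 2 + μ.im ^ 2 ≤ Γ i i ^ 2 := by
    have h := pow_le_pow_left₀ (norm_nonneg _) hi 2
    rw [Complex.sq_norm, Complex.normSq_apply] at h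
    simpa [← sq] using h
  refine or_iff_not_imp_left.2 fun hre => ?_
  have hnorm : μ.re ^ 2 + μ.im ^ 2 ≤ 0 := by
    nlinarith [mul_nonneg (not_lt.1 hre) (neg_nonneg.2 hdiag)]
  have hre0 : μ.re = 0 := by nlinarith
  have him0 : μ.im = 0 := by nlinarith
  exact Complex.ext hre0 him0

theorem IsInterconnection.eq_of_pos_of_mulVec_eq_zero_of_forall_le (hΓ : IsInterconnection Γ)
    {v : Fin p → ℝ} (hv : Γ *ᵥ v = 0) {a b : Fin p} (hmax : ∀ j, v j ≤ v a) (hab : 0 < Γ a b) :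
    v b = v a := by
  have hsum : ∑ j, Γ a j * (v a - v j) = 0 := by
    have hva : ∑ j, Γ a j * v j = 0 := congrFun hv a
    rw [Finset.sum_congr rfl fun j _ => mul_sub (Γ a j) (v a) (v j), Finset.sum_sub_distrib,
      ← Finset.sum_mul, hΓ.2 a, hva, zero_mul, sub_zero]
  have hnonneg : ∀ j ∈ Finset.univ, 0 ≤ Γ a j * (v a - v j) := by
    intro j _
    rcases eq_or_ne a j with rfl | haj
    · simp
    · exact mul_nonneg (hΓ.1 a j haj) (sub_nonneg.2 (hmax j))
  have hb := (Finset.sum_eq_zero_iff_of_nonneg hnonneg).1 hsum b (Finset.mem_univ b)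
  linarith [(mul_eq_zero.1 hb).resolve_left hab.ne']

theorem IsInterconnection.le_of_mulVec_eq_zero_of_forall_reflTransGen (hΓ : IsInterconnection Γ)
    {k : Fin p} (hk : ∀ i, Relation.ReflTransGen (fun a b => 0 < Γ a b) i k) {v : Fin p → ℝ}
    (hv : Γ *ᵥ v = 0) (i : Fin p) : v i ≤ v k := by
  have : Nonempty (Fin p) := ⟨k⟩
  obtain ⟨m, hm⟩ := Finite.exists_max v
  have hreach (b : Fin p) (hb : Relation.ReflTransGen (fun a b => 0 < Γ a b) m b) : v b = v m := by
    induction hb with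
    | refl => rfl
    | tail _ hbc hb =>
      have hmax (j : Fin p) := (hm j).trans_eq hb.symm
      exact (hΓ.eq_of_pos_of_mulVec_eq_zero_of_forall_le hv hmax hbc).trans hb
  exact (hm i).trans_eq (hreach k (hk m)).symm

theorem IsConnectedInterconnection.eq_of_mulVec_eq_zero (hΓ : IsConnectedInterconnection Γ)
    {v : Fin p → ℝ} (hv : Γ *ᵥ v = 0) (i j : Fin p) : v i = v j := by
  obtain ⟨hI, k, hk⟩ := hΓ
  have hroot (l : Fin p) : v l = v k := by
    have hneg : Γ *ᵥ -v = 0 := by rw [mulVec_neg, hv, neg_zero]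
    exact le_antisymm (hI.le_of_mulVec_eq_zero_of_forall_reflTransGen hk hv l)
      (neg_le_neg_iff.1 (hI.le_of_mulVec_eq_zero_of_forall_reflTransGen hk hneg l))
  rw [hroot i, hroot j]

theorem IsConnectedInterconnection.eq_of_map_mulVec_eq_zero (hΓ : IsConnectedInterconnection Γ)
    {v : Fin p → ℂ} (hv : Γ.map Complex.ofReal *ᵥ v = 0) (i j : Fin p) : v i = v j := by
  have hre : Γ *ᵥ (fun l => (v l).re) = 0 := by
    ext a
    simpa [mulVec, dotProduct] using congrArg Complex.re (congrFun hv a)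
  have him : Γ *ᵥ (fun l => (v l).im) = 0 := by
    ext a
    simpa [mulVec, dotProduct] using congrArg Complex.im (congrFun hv a)
  exact Complex.ext (hΓ.eq_of_mulVec_eq_zero hre i j) (hΓ.eq_of_mulVec_eq_zero him i j)

theorem IsConnectedInterconnection.isHurwitz_sub_vecMulVec (hΓ : IsConnectedInterconnection Γ)
    {r : Fin p → ℝ} (hr : r ᵥ* Γ = 0) (hr1 : ∑ i, r i = 1) :
    IsHurwitz ((Γ - vecMulVec (fun _ => 1) r).map Complex.ofReal) := by
  intro μ hμ
  set Q := vecMulVec (fun _ => (1 : ℝ)) r with hQ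
  have hQidem : IsIdempotentElem Q := isIdempotentElem_vecMulVec (by simpa [dotProduct] using hr1)
  have hQΓ : Q * Γ = 0 := by rw [hQ, vecMulVec_mul, hr, vecMulVec_zero]
  rw [Matrix.map_sub _ Complex.ofReal_sub] at hμ
  rcases eq_neg_one_or_exists_eigenvector_of_mem_spectrum_sub (M := Γ.map Complex.ofReal)
    (Q := Q.map Complex.ofReal)
    ((Matrix.map_mul (f := Complex.ofRealHom)).symm.trans (by simp [hQΓ]))
    (hQidem.map Complex.ofRealHom.mapMatrix) hμ with rfl | ⟨v, hv0, hΓv, hQv⟩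
  · simp
  refine (hΓ.1.re_neg_or_eq_zero_of_mem_spectrum
    (mem_spectrum_iff_exists_mulVec_eq_smul.2 ⟨v, hv0, hΓv⟩)).resolve_right ?_
  rintro rfl
  have hconst := hΓ.eq_of_map_mulVec_eq_zero (hΓv.trans (zero_smul ℂ v))
  refine hv0 (funext fun i => ?_)
  calc v i = (∑ j, (r j : ℂ)) * v i := by rw [← Complex.ofReal_sum, hr1]; simp
    _ = ∑ j, (r j : ℂ) * v j := by
      rw [Finset.sum_mul]; exact Finset.sum_congr rfl fun j _ => by rw [hconst j i]
    _ = (Q.map Complex.ofReal *ᵥ v) i := by simp [hQ, mulVec, dotProduct, vecMulVec_apply]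
    _ = 0 := congrFun hQv i

end Interconnection

/-- If no eigenvalue of `A` has positive real part and `C` has full column rank,
then the feedback law `L = (CᵀC)⁻¹Cᵀ` (so that `LC = I`) synchronizes the array for
every connected interconnection `Γ`: the solution `x(t) = exp(t(I_p ⊗ A + Γ ⊗ LC)) x(0)`
converges to `(1rᵀ ⊗ exp(tA)) x(0)`, and each block synchronizes to
`x̄(t) = (rᵀ ⊗ exp(tA)) x(0)`. -/
theorem critically_unstable_full_rank_synchronizable
    (n m : ℕ) (A : Matrix (Fin n) (Fin n) ℝ) (C : Matrix (Fin m) (Fin n) ℝ)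
    (hstab : ∀ μ ∈ spectrum ℂ (A.map Complex.ofReal), μ.re ≤ 0)
    (hrank : C.rank = n)
    (p : ℕ) (Γ : Matrix (Fin p) (Fin p) ℝ) (hΓ : IsConnectedInterconnection Γ)
    (r : Fin p → ℝ) (hr : r ᵥ* Γ = 0) (hr1 : ∑ i, r i = 1)
    (x0 : Fin p × Fin n → ℝ) :
    Tendsto (fun t : ℝ =>
        NormedSpace.exp (t • ((1 : Matrix (Fin p) (Fin p) ℝ) ⊗ₖ A
            + Γ ⊗ₖ ((Cᵀ * C)⁻¹ * Cᵀ * C))) *ᵥ x0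
          - (vecMulVec (fun _ => (1 : ℝ)) r ⊗ₖ NormedSpace.exp (t • A)) *ᵥ x0)
      atTop (nhds 0) ∧
    ∀ i : Fin p,
      Tendsto (fun t : ℝ => (fun k : Fin n =>
          (NormedSpace.exp (t • ((1 : Matrix (Fin p) (Fin p) ℝ) ⊗ₖ A
              + Γ ⊗ₖ ((Cᵀ * C)⁻¹ * Cᵀ * C))) *ᵥ x0) (i, k)
            - ∑ j : Fin p, r j * (NormedSpace.exp (t • A) *ᵥ fun l => x0 (j, l)) k))
        atTop (nhds 0) := by
  rw [inv_transpose_mul_self_mul_transpose_mul_self (hrank.trans (Fintype.card_fin n).symm)]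
  have hΓQ : Γ * vecMulVec (fun _ => 1) r = 0 := by
    rw [mul_vecMulVec, hΓ.1.mulVec_const_one, zero_vecMulVec]
  have hQΓ : vecMulVec (fun _ : Fin p => 1) r * Γ = 0 := by rw [vecMulVec_mul, hr, vecMulVec_zero]
  have hQ : IsIdempotentElem (vecMulVec (fun _ : Fin p => 1) r) :=
    isIdempotentElem_vecMulVec (by simpa [dotProduct] using hr1)
  have hexp := tendsto_exp_smul_sub_kronecker_exp hΓQ hQΓ hQ fun α hα γ hγ =>
    add_neg_of_nonpos_of_neg (hstab α hα) (hΓ.isHurwitz_sub_vecMulVec hr hr1 γ hγ)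
  have hcont : Continuous fun M : Matrix (Fin p × Fin n) (Fin p × Fin n) ℝ => M *ᵥ x0 := by
    fun_prop
  have hlim := (hcont.tendsto 0).comp hexp
  simp only [Function.comp_def, sub_mulVec, zero_mulVec] at hlim
  refine ⟨hlim, fun i => tendsto_pi_nhds.2 fun k => ?_⟩
  simpa only [Pi.sub_apply, Pi.zero_apply, vecMulVec_one_kronecker_mulVec_apply] using
    tendsto_pi_nhds.1 hlim (i, k)
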